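/- Given any upward closed Σ^0_3 set J of finite binary strings, there exists an oracle machine M such that for each X ∈ 2^ω the following are equivalent: (i) X has a prefix in J; (ii) the domain of M(X) is cofinite; (iii) the domain of M(X) is computable. Moreover, for every X the domain of M(X) equals the range of M(X), and whenever X has no prefix in J the domain of M(X) Turing-computes the halting problem. -/

import Mathlib

open scoped Classical
open MeasureTheory

namespace RandProb

/-- Cantor space: the space of infinite binary sequences. -/
abbrev Cantor := ℕ → Bool

/-! ### Oracle partial recursive functions, via codes -/

/-- Codes for partial recursive functions with access to an oracle `O : ℕ → ℕ`.
These codes play the role of (oracle) Turing machines. -/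
inductive CodeO : Type
  | zero : CodeO
  | succ : CodeO
  | left : CodeO
  | right : CodeO
  | oracle : CodeO
  | pair : CodeO → CodeO → CodeO
  | comp : CodeO → CodeO → CodeO
  | prec : CodeO → CodeO → CodeO
  | rfind' : CodeO → CodeO

/-- Evaluation of an oracle code with (total) oracle `O`. -/
def CodeO.eval (O : ℕ → ℕ) : CodeO → ℕ →. ℕ
  | .zero => pure 0
  | .succ => Nat.succ
  | .left => ↑fun n : ℕ => n.unpair.1
  | .right => ↑fun n : ℕ => n.unpair.2
  | .oracle => ↑fun n : ℕ => O n
  | .pair cf cg => fun n => Nat.pair <$> cf.eval O n <*> cg.eval O n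
  | .comp cf cg => fun n => cg.eval O n >>= cf.eval O
  | .prec cf cg =>
    Nat.unpaired fun a n =>
      n.rec (cf.eval O a) fun y IH => do
        let i ← IH
        cg.eval O (Nat.pair a (Nat.pair y i))
  | .rfind' cf =>
    Nat.unpaired fun a m =>
      (Nat.rfind fun n => (fun m => m = 0) <$> cf.eval O (Nat.pair a (n + m))).map (· + m)

/-- A canonical injective numbering of oracle codes. -/
def CodeO.encode : CodeO → ℕ
  | .zero => 0
  | .succ => 1
  | .left => 2
  | .right => 3
  | .oracle => 4
  | .pair cf cg => 2 * (2 * Nat.pair cf.encode cg.encode) + 5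
  | .comp cf cg => 2 * (2 * Nat.pair cf.encode cg.encode + 1) + 5
  | .prec cf cg => 2 * (2 * Nat.pair cf.encode cg.encode) + 6
  | .rfind' cf => 2 * (2 * cf.encode + 1) + 6

/-- The Turing jump of an oracle: the halting problem relative to `O`,
as a `{0,1}`-valued function. -/
noncomputable def jump (O : ℕ → ℕ) : ℕ → ℕ := fun e =>
  if ∃ c : CodeO, c.encode = e ∧ (c.eval O e).Dom then 1 else 0

/-- `iterJump n` is `∅^(n)`, the `n`-th iterate of the halting problem (as an oracle). -/
noncomputable def iterJump : ℕ → ℕ → ℕ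
  | 0 => fun _ => 0
  | n + 1 => jump (iterJump n)

/-- `S ⊆ ℕ` is computably enumerable relative to the oracle `O`. -/
def CeIn (O : ℕ → ℕ) (S : Set ℕ) : Prop := ∃ c : CodeO, S = {m | (c.eval O m).Dom}

/-- The left Dedekind cut of `α` (as a set of codes of rationals) is c.e. in `O`. -/
def LeftCeIn (O : ℕ → ℕ) (α : ℝ) : Prop :=
  CeIn O {m | ∃ q : ℚ, Encodable.encode q = m ∧ (q : ℝ) < α}

/-- The right Dedekind cut of `α` (as a set of codes of rationals) is c.e. in `O`. -/
def RightCeIn (O : ℕ → ℕ) (α : ℝ) : Prop :=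
  CeIn O {m | ∃ q : ℚ, Encodable.encode q = m ∧ α < (q : ℝ)}

/-! ### Martin-Löf randomness for real numbers -/

/-- The `i`-th component of a Martin-Löf test coded by the set `W ⊆ ℕ`:
the union of all open rational intervals whose codes are enumerated into the
`i`-th section of `W`. -/
def testSet (W : Set ℕ) (i : ℕ) : Set ℝ :=
  {x | ∃ p q : ℚ, Nat.pair i (Encodable.encode (p, q)) ∈ W ∧ (p : ℝ) < x ∧ x < (q : ℝ)}

/-- `α` is Martin-Löf random relative to the oracle `O`. -/
def MLRandomIn (O : ℕ → ℕ) (α : ℝ) : Prop :=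
  ∀ W : Set ℕ, CeIn O W →
    (∀ i, volume (testSet W i) ≤ ENNReal.ofReal ((2 : ℝ)⁻¹ ^ i)) →
    ∃ i, α ∉ testSet W i

/-- `α` is `n`-random: Martin-Löf random relative to `∅^(n-1)`. -/
def NRandom (n : ℕ) (α : ℝ) : Prop := MLRandomIn (iterJump (n - 1)) α

/-! ### The uniform measure on Cantor space -/

/-- The binary digits of a real number (meaningful on `[0,1)`). -/
noncomputable def digits (x : ℝ) : Cantor := fun n => decide (⌊x * 2 ^ (n + 1)⌋ % 2 = 1)

/-- The uniform (Lebesgue) product measure on Cantor space, obtained as the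
pushforward of Lebesgue measure on `[0,1)` under the binary-digit map. -/
noncomputable def mu : Measure Cantor :=
  Measure.map digits (volume.restrict (Set.Ico (0 : ℝ) 1))

/-- The uniform measure of a set of elements of Cantor space, as a real number. -/
noncomputable def muR (S : Set Cantor) : ℝ := (mu S).toReal

/-! ### Strings, prefixes and cylinders -/

/-- The length-`n` initial segment of `X ∈ 2^ω`, as a finite binary string. -/
def initSeg (X : Cantor) (n : ℕ) : List Bool := (List.range n).map X

/-- `⟦S⟧`: the elements of Cantor space having a prefix in the set of strings `S`. -/
def cyl (S : Set (List Bool)) : Set Cantor := {X | ∃ n, initSeg X n ∈ S}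

/-- A set of strings is prefix-free if none of its elements properly extends another. -/
def IsPrefixFree (S : Set (List Bool)) : Prop := ∀ σ ∈ S, ∀ τ ∈ S, σ <+: τ → σ = τ

/-- A set of strings is upward closed if it is closed under taking extensions. -/
def UpClosed (S : Set (List Bool)) : Prop := ∀ σ ∈ S, ∀ τ, σ <+: τ → τ ∈ S

/-- Two strings are compatible if one is a prefix of the other. -/
def Compatible (σ τ : List Bool) : Prop := σ <+: τ ∨ τ <+: σ

/-! ### Oracle machines -/

/-- An element of Cantor space viewed as a `{0,1}`-valued oracle. -/
def oX (X : Cantor) : ℕ → ℕ := fun n => cond (X n) 1 0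

/-- `evalO X c n`: the (possibly divergent) output of the oracle machine `c`
on input `n` with oracle `X`. -/
def evalO (X : Cantor) (c : CodeO) (n : ℕ) : Part ℕ := c.eval (oX X) n

/-- The oracle obtained by writing the string `ρ` before the bits of `X`. -/
def prepend (ρ : List Bool) (X : Cantor) : Cantor := fun n =>
  if n < ρ.length then ρ.getD n false else X (n - ρ.length)

/-- `X ∈ 2^ω` extends the finite string `ρ`. -/
def Extends (X : Cantor) (ρ : List Bool) : Prop := initSeg X ρ.length = ρ

/-- `u` is a universal oracle machine: some effective, prefix-free translation
`c ↦ σ_c` satisfies `u(σ_c * X, n) ≃ c(X, n)` for all machines `c`. -/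
def UniversalOM (u : CodeO) : Prop :=
  ∃ σ : CodeO → List Bool,
    (∃ f : ℕ → ℕ, Computable f ∧ ∀ c : CodeO, f c.encode = Encodable.encode (σ c)) ∧
    IsPrefixFree (Set.range σ) ∧
    ∀ (c : CodeO) (X : Cantor) (n : ℕ), evalO (prepend (σ c) X) u n = evalO X c n

/-- `TOT(c)`: the oracles `X` such that the function `c(X)` is total. -/
def TOT (c : CodeO) : Set Cantor := {X | ∀ n, (evalO X c n).Dom}

/-- The domain of the partial function `c(X)`. -/
def domSet (c : CodeO) (X : Cantor) : Set ℕ := {n | (evalO X c n).Dom}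

/-- The range of the partial function `c(X)`. -/
def ranSet (c : CodeO) (X : Cantor) : Set ℕ := {v | ∃ n, v ∈ evalO X c n}

/-- `INF(c)`: the oracles `X` such that `c(X)` has infinite domain. -/
def INF (c : CodeO) : Set Cantor := {X | (domSet c X).Infinite}

/-- `COF(c)`: the oracles `X` such that `c(X)` has cofinite domain. -/
def COF (c : CodeO) : Set Cantor := {X | (domSet c X)ᶜ.Finite}

/-- `COM(c)`: the oracles `X` such that `c(X)` has computable domain. -/
def COM (c : CodeO) : Set Cantor := {X | ComputablePred fun n => n ∈ domSet c X}

/-- The characteristic function of a set of naturals. -/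
noncomputable def chi (A : Set ℕ) : ℕ → ℕ := fun n => if n ∈ A then 1 else 0

/-- Turing reducibility between sets of naturals. -/
def TuringLEs (B A : Set ℕ) : Prop := ∃ c : CodeO, ∀ n, c.eval (chi A) n = Part.some (chi B n)

/-- The halting problem `∅'` as a set of naturals. -/
noncomputable def HaltingSet : Set ℕ := {e | iterJump 1 e = 1}

/-- `COMPL(c)`: the oracles `X` such that the domain of `c(X)` computes the halting problem. -/
noncomputable def COMPL (c : CodeO) : Set Cantor := {X | TuringLEs HaltingSet (domSet c X)}

/-- Turing reducibility between total functions on ℕ. -/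
def TuringLEf (f g : ℕ → ℕ) : Prop := ∃ c : CodeO, ∀ n, c.eval g n = Part.some (f n)

/-- A real number viewed as an oracle, via its binary expansion. -/
noncomputable def realOracle (α : ℝ) : ℕ → ℕ := oX (digits α)

/-- Two reals have Turing-incomparable degrees. -/
noncomputable def TIncompReal (α β : ℝ) : Prop :=
  ¬ TuringLEf (realOracle α) (realOracle β) ∧ ¬ TuringLEf (realOracle β) (realOracle α)

/-! ### Arithmetical hierarchy -/

/-- Evaluation with the trivial (empty) oracle: ordinary partial recursion. -/
def eval0 (c : CodeO) : ℕ →. ℕ := c.eval fun _ => 0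

/-- `SigmaNumIdx n c` is the `Σ^0_{n+1}` subset of `ℕ` with index `c`. -/
def SigmaNumIdx : ℕ → CodeO → Set ℕ
  | 0, c => {m | (eval0 c m).Dom}
  | n + 1, c => {m | ∃ k, Nat.pair m k ∉ SigmaNumIdx n c}

/-- `S ⊆ ℕ` is `Σ^0_n` (intended for `n ≥ 1`). -/
def SigmaN (n : ℕ) (S : Set ℕ) : Prop := ∃ c : CodeO, S = SigmaNumIdx (n - 1) c

/-- The set of codes of the elements of a set of binary strings. -/
def strCodes (S : Set (List Bool)) : Set ℕ := {m | ∃ σ ∈ S, Encodable.encode σ = m}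

/-- A set of binary strings is `Σ^0_n`. -/
def SigmaStr (n : ℕ) (S : Set (List Bool)) : Prop := SigmaN n (strCodes S)

/-- A set of binary strings is `Π^0_n`: its complement is `Σ^0_n`. -/
def PiStr (n : ℕ) (S : Set (List Bool)) : Prop := SigmaStr n Sᶜ

/-- A set of binary strings is c.e. relative to the oracle `O`. -/
def CeStrIn (O : ℕ → ℕ) (S : Set (List Bool)) : Prop := CeIn O (strCodes S)

/-- `SigmaClassIdx n c m` is the `Σ^0_{n+1}` class of elements of Cantor space
with index `c` and parameter `m`. -/
def SigmaClassIdx : ℕ → CodeO → ℕ → Set Cantor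
  | 0, c, m => {X | (evalO X c m).Dom}
  | n + 1, c, m => {X | ∃ k, X ∉ SigmaClassIdx n c (Nat.pair m k)}

/-! ### Monotone machines -/

/-- A monotone machine: a partial computable, monotone map on finite binary strings. -/
structure MonoMachine where
  f : List Bool →. List Bool
  partrec : Partrec f
  mono : ∀ ⦃σ τ a b : List Bool⦄, σ <+: τ → a ∈ f σ → b ∈ f τ → a <+: b

/-- The oracles `X` such that the output of the monotone machine on `X` is infinite. -/
def MonoINF (M : MonoMachine) : Set Cantor :=
  {X | ∀ k, ∃ n a, a ∈ M.f (initSeg X n) ∧ k ≤ a.length}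

/-- The `k`-th bit of the output `M(X)` of a monotone machine is `b`. -/
def MonoMachine.hasBit (M : MonoMachine) (X : Cantor) (k : ℕ) (b : Bool) : Prop :=
  ∃ n a, a ∈ M.f (initSeg X n) ∧ a[k]? = some b

/-- `U` is a universal monotone machine. -/
def UniversalMono (U : MonoMachine) : Prop :=
  ∃ (M : ℕ → MonoMachine) (σ : ℕ → List Bool),
    Partrec₂ (fun (e : ℕ) (τ : List Bool) => (M e).f τ) ∧
    (∀ V : MonoMachine, ∃ e, (M e).f = V.f) ∧
    Computable σ ∧ IsPrefixFree (Set.range σ) ∧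
    ∀ e τ, U.f (σ e ++ τ) = (M e).f τ

/-! ### Infinitary self-delimiting machines -/

/-- Chaitin's infinitary self-delimiting machines: `f σ n` is the `n`-th approximation
of the output on program `σ` (`none` meaning divergence); the convergence relation is
decidable, approximations are monotone, and machines are self-delimiting. -/
structure InfMachine where
  f : List Bool → ℕ → Option (List Bool)
  computable : Computable₂ f
  mono : ∀ σ m n a, n < m → f σ m = some a → ∃ b, f σ n = some b ∧ b <+: a
  sd : ∀ σ τ n a, f σ n = some a → f (σ ++ τ) n = some a

/-- `M^∞(σ)↓`: all approximations converge. -/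
def InfMachine.domInf (M : InfMachine) (σ : List Bool) : Prop := ∀ n, M.f σ n ≠ none

/-- The domain of `M^∞`. -/
def InfMachine.DOM (M : InfMachine) : Set (List Bool) := {σ | M.domInf σ}

/-- The output `M^∞(σ)` is infinite (a stream). -/
def InfMachine.outInf (M : InfMachine) (σ : List Bool) : Prop :=
  ∀ k, ∃ n a, M.f σ n = some a ∧ k ≤ a.length

/-- `FIN(M^∞)`: programs in the domain with finite output. -/
def InfMachine.FIN (M : InfMachine) : Set (List Bool) := {σ | M.domInf σ ∧ ¬ M.outInf σ}

/-- `INF(M^∞)`: programs in the domain with infinite output. -/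
def InfMachine.INF (M : InfMachine) : Set (List Bool) := {σ | M.domInf σ ∧ M.outInf σ}

/-- The `k`-th bit of the output `M^∞(σ)` is `b`. -/
def InfMachine.hasBit (M : InfMachine) (σ : List Bool) (k : ℕ) (b : Bool) : Prop :=
  ∃ n a, M.f σ n = some a ∧ a[k]? = some b

/-- The domain of the prefix-free machine `M^*`: minimal strings in the domain of `M^∞`. -/
def InfMachine.DOMstar (M : InfMachine) : Set (List Bool) :=
  {σ | M.domInf σ ∧ ∀ τ, τ <+: σ → τ ≠ σ → ¬ M.domInf τ}

/-- Programs whose output is a stream with a tail of 1s. -/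
def InfMachine.COFout (M : InfMachine) : Set (List Bool) :=
  {σ | M.domInf σ ∧ M.outInf σ ∧ ∃ t, ∀ k, t ≤ k → M.hasBit σ k true}

/-- `A^∞(σ) ≃ B^∞(τ)`: both converge or both diverge, with equal outputs. -/
def InfAgree (A : InfMachine) (σ : List Bool) (B : InfMachine) (τ : List Bool) : Prop :=
  (A.domInf σ ↔ B.domInf τ) ∧ (A.domInf σ → ∀ k b, (A.hasBit σ k b ↔ B.hasBit τ k b))

/-- `U` is a universal infinitary self-delimiting machine. -/
def UniversalInf (U : InfMachine) : Prop :=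
  ∃ (M : ℕ → InfMachine) (σ : ℕ → List Bool),
    Computable (fun p : ℕ × List Bool × ℕ => (M p.1).f p.2.1 p.2.2) ∧
    (∀ V : InfMachine, ∃ e, ∀ τ, InfAgree (M e) τ V τ) ∧
    Computable σ ∧ IsPrefixFree (Set.range σ) ∧
    ∀ e τ, InfAgree U (σ e ++ τ) (M e) τ

end RandProb

namespace RandProb

open Nat.Partrec (Code)

/-! ### Basic facts on oracle codes -/

theorem CodeO.eval_partrec {O : ℕ → ℕ} (hO : Computable O) (c : CodeO) :
    Nat.Partrec (c.eval O) := by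
  induction c with
  | zero => exact Nat.Partrec.zero
  | succ => exact Nat.Partrec.succ
  | left => exact Nat.Partrec.left
  | right => exact Nat.Partrec.right
  | oracle => exact Partrec.nat_iff.1 hO
  | pair cf cg hf hg => exact hf.pair hg
  | comp cf cg hf hg => exact hf.comp hg
  | prec cf cg hf hg => exact hf.prec hg
  | rfind' cf hf => exact hf.rfind'

/-- Ordinary codes as oracle codes. -/
def emb : Code → CodeO
  | .zero => .zero
  | .succ => .succ
  | .left => .left
  | .right => .right
  | .pair cf cg => .pair (emb cf) (emb cg)
  | .comp cf cg => .comp (emb cf) (emb cg)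
  | .prec cf cg => .prec (emb cf) (emb cg)
  | .rfind' cf => .rfind' (emb cf)

theorem emb_eval (O : ℕ → ℕ) (c : Code) : (emb c).eval O = c.eval := by
  induction c with
  | zero => rfl
  | succ => rfl
  | left => rfl
  | right => rfl
  | pair cf cg hf hg => simp only [emb, CodeO.eval, Code.eval, hf, hg]; rfl
  | comp cf cg hf hg => simp only [emb, CodeO.eval, Code.eval, hf, hg]; rfl
  | prec cf cg hf hg => simp only [emb, CodeO.eval, Code.eval, hf, hg]; rfl
  | rfind' cf hf => simp only [emb, CodeO.eval, Code.eval, hf]; rfl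

/-- Oracle codes as ordinary codes, for the zero oracle. -/
def trC : CodeO → Code
  | .zero => .zero
  | .succ => .succ
  | .left => .left
  | .right => .right
  | .oracle => .zero
  | .pair cf cg => .pair (trC cf) (trC cg)
  | .comp cf cg => .comp (trC cf) (trC cg)
  | .prec cf cg => .prec (trC cf) (trC cg)
  | .rfind' cf => .rfind' (trC cf)

theorem trC_eval (c : CodeO) : (trC c).eval = c.eval (fun _ => 0) := by
  induction c with
  | zero => rfl
  | succ => rfl
  | left => rfl
  | right => rfl
  | oracle => rfl
  | pair cf cg hf hg => simp only [trC, CodeO.eval, Code.eval, hf, hg]; rfl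
  | comp cf cg hf hg => simp only [trC, CodeO.eval, Code.eval, hf, hg]; rfl
  | prec cf cg hf hg => simp only [trC, CodeO.eval, Code.eval, hf, hg]; rfl
  | rfind' cf hf => simp only [trC, CodeO.eval, Code.eval, hf]; rfl

theorem CodeO.encode_inj : Function.Injective CodeO.encode := by
  intro c
  induction c with
  | zero => intro d h; cases d <;> simp [CodeO.encode] at h ⊢
  | succ => intro d h; cases d <;> simp [CodeO.encode] at h ⊢
  | left => intro d h; cases d <;> simp [CodeO.encode] at h ⊢
  | right => intro d h; cases d <;> simp [CodeO.encode] at h ⊢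
  | oracle => intro d h; cases d <;> simp [CodeO.encode] at h ⊢
  | pair cf cg hf hg =>
    intro d h
    cases d <;> simp only [CodeO.encode] at h <;> try omega
    rename_i a b
    have h2 : Nat.pair cf.encode cg.encode = Nat.pair a.encode b.encode := by omega
    rw [Nat.pair_eq_pair] at h2
    rw [hf h2.1, hg h2.2]
  | comp cf cg hf hg =>
    intro d h
    cases d <;> simp only [CodeO.encode] at h <;> try omega
    rename_i a b
    have h2 : Nat.pair cf.encode cg.encode = Nat.pair a.encode b.encode := by omega
    rw [Nat.pair_eq_pair] at h2
    rw [hf h2.1, hg h2.2]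
  | prec cf cg hf hg =>
    intro d h
    cases d <;> simp only [CodeO.encode] at h <;> try omega
    rename_i a b
    have h2 : Nat.pair cf.encode cg.encode = Nat.pair a.encode b.encode := by omega
    rw [Nat.pair_eq_pair] at h2
    rw [hf h2.1, hg h2.2]
  | rfind' cf hf =>
    intro d h
    cases d <;> simp only [CodeO.encode] at h <;> try omega
    rename_i a
    have h2 : cf.encode = a.encode := by omega
    rw [hf h2]

theorem CodeO.encode_surj : Function.Surjective CodeO.encode := by
  intro n
  induction n using Nat.strong_induction_on with
  | _ n ih =>
    rcases Nat.lt_or_ge n 5 with h | h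
    · interval_cases n
      exacts [⟨.zero, rfl⟩, ⟨.succ, rfl⟩, ⟨.left, rfl⟩, ⟨.right, rfl⟩, ⟨.oracle, rfl⟩]
    · have hl := Nat.unpair_left_le ((n - 5) / 4)
      have hr := Nat.unpair_right_le ((n - 5) / 4)
      obtain ⟨a, ha⟩ := ih ((n - 5) / 4).unpair.1 (by omega)
      obtain ⟨b, hb⟩ := ih ((n - 5) / 4).unpair.2 (by omega)
      obtain ⟨c, hc⟩ := ih ((n - 5) / 4) (by omega)
      have h4 : (n - 5) % 4 < 4 := Nat.mod_lt _ (by norm_num)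
      have hp : Nat.pair a.encode b.encode = (n - 5) / 4 := by rw [ha, hb, Nat.pair_unpair]
      have : (n - 5) % 4 = 0 ∨ (n - 5) % 4 = 1 ∨ (n - 5) % 4 = 2 ∨ (n - 5) % 4 = 3 := by omega
      rcases this with h | h | h | h
      · exact ⟨.pair a b, by simp only [CodeO.encode, hp]; omega⟩
      · exact ⟨.prec a b, by simp only [CodeO.encode, hp]; omega⟩
      · exact ⟨.comp a b, by simp only [CodeO.encode, hp]; omega⟩
      · exact ⟨.rfind' c, by simp only [CodeO.encode, hc]; omega⟩

/-- Decoding of oracle codes. -/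
noncomputable def decO (n : ℕ) : CodeO := (CodeO.encode_surj n).choose

theorem encode_decO (n : ℕ) : (decO n).encode = n := (CodeO.encode_surj n).choose_spec

theorem decO_encode (c : CodeO) : decO c.encode = c := CodeO.encode_inj (encode_decO _)

/-- Recursion step for the computation of `trC ∘ decO`. -/
def trStep (L : List Code) : Code :=
  if L.length = 0 then Code.zero else
  if L.length = 1 then Code.succ else
  if L.length = 2 then Code.left else
  if L.length = 3 then Code.right else
  if L.length = 4 then Code.zero else
  if (L.length - 5) % 4 = 0 then
    Code.pair (L.getD ((L.length - 5) / 4).unpair.1 Code.zero)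
      (L.getD ((L.length - 5) / 4).unpair.2 Code.zero) else
  if (L.length - 5) % 4 = 1 then
    Code.prec (L.getD ((L.length - 5) / 4).unpair.1 Code.zero)
      (L.getD ((L.length - 5) / 4).unpair.2 Code.zero) else
  if (L.length - 5) % 4 = 2 then
    Code.comp (L.getD ((L.length - 5) / 4).unpair.1 Code.zero)
      (L.getD ((L.length - 5) / 4).unpair.2 Code.zero) else
  Code.rfind' (L.getD ((L.length - 5) / 4) Code.zero)

theorem trStep_primrec : Primrec trStep := by
  have hl : Primrec (fun L : List Code => L.length) := Primrec.list_length
  have hm : Primrec (fun L : List Code => (L.length - 5) % 4) :=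
    Primrec.nat_mod.comp (Primrec.nat_sub.comp hl (Primrec.const 5)) (Primrec.const 4)
  have hd : Primrec (fun L : List Code => (L.length - 5) / 4) :=
    Primrec.nat_div.comp (Primrec.nat_sub.comp hl (Primrec.const 5)) (Primrec.const 4)
  have hu : Primrec (fun L : List Code => ((L.length - 5) / 4).unpair) :=
    Primrec.unpair.comp hd
  have g1 : Primrec (fun L : List Code => L.getD ((L.length - 5) / 4).unpair.1 Code.zero) :=
    (Primrec.list_getD Code.zero).comp Primrec.id (Primrec.fst.comp hu)
  have g2 : Primrec (fun L : List Code => L.getD ((L.length - 5) / 4).unpair.2 Code.zero) :=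
    (Primrec.list_getD Code.zero).comp Primrec.id (Primrec.snd.comp hu)
  have g0 : Primrec (fun L : List Code => L.getD ((L.length - 5) / 4) Code.zero) :=
    (Primrec.list_getD Code.zero).comp Primrec.id hd
  have el : ∀ k, PrimrecPred (fun L : List Code => L.length = k) := fun k =>
    Primrec.eq.comp hl (Primrec.const k)
  have em : ∀ k, PrimrecPred (fun L : List Code => (L.length - 5) % 4 = k) := fun k =>
    Primrec.eq.comp hm (Primrec.const k)
  unfold trStep
  refine Primrec.ite (el 0) (Primrec.const _) <| Primrec.ite (el 1) (Primrec.const _) <|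
    Primrec.ite (el 2) (Primrec.const _) <| Primrec.ite (el 3) (Primrec.const _) <|
    Primrec.ite (el 4) (Primrec.const _) <|
    Primrec.ite (em 0) (Code.primrec₂_pair.comp g1 g2) <|
    Primrec.ite (em 1) (Code.primrec₂_prec.comp g1 g2) <|
    Primrec.ite (em 2) (Code.primrec₂_comp.comp g1 g2) <| Code.primrec_rfind'.comp g0

theorem trStep_spec (n : ℕ) :
    trStep ((List.range n).map fun k => trC (decO k)) = trC (decO n) := by
  have key : ∀ c : CodeO, c.encode < n →
      ((List.range n).map fun k => trC (decO k)).getD c.encode Code.zero = trC c := by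
    intro c hc
    simp [List.getD, hc, decO_encode]
  obtain ⟨c, rfl⟩ := CodeO.encode_surj n
  rw [decO_encode]
  unfold trStep
  simp only [List.length_map, List.length_range]
  cases c with
  | zero => simp [CodeO.encode, trC]
  | succ => simp [CodeO.encode, trC]
  | left => simp [CodeO.encode, trC]
  | right => simp [CodeO.encode, trC]
  | oracle => simp [CodeO.encode, trC]
  | pair a b =>
    have e : (CodeO.pair a b).encode = 2 * (2 * Nat.pair a.encode b.encode) + 5 := rfl
    have ha := Nat.left_le_pair a.encode b.encode
    have hb := Nat.right_le_pair a.encode b.encode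
    have e2 : ((CodeO.pair a b).encode - 5) / 4 = Nat.pair a.encode b.encode := by omega
    rw [if_neg (by omega), if_neg (by omega), if_neg (by omega), if_neg (by omega),
      if_neg (by omega), if_pos (by omega), e2, Nat.unpair_pair, key a (by omega),
      key b (by omega)]
    rfl
  | comp a b =>
    have e : (CodeO.comp a b).encode = 2 * (2 * Nat.pair a.encode b.encode + 1) + 5 := rfl
    have ha := Nat.left_le_pair a.encode b.encode
    have hb := Nat.right_le_pair a.encode b.encode
    have e2 : ((CodeO.comp a b).encode - 5) / 4 = Nat.pair a.encode b.encode := by omega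
    rw [if_neg (by omega), if_neg (by omega), if_neg (by omega), if_neg (by omega),
      if_neg (by omega), if_neg (by omega), if_neg (by omega), if_pos (by omega), e2,
      Nat.unpair_pair, key a (by omega), key b (by omega)]
    rfl
  | prec a b =>
    have e : (CodeO.prec a b).encode = 2 * (2 * Nat.pair a.encode b.encode) + 6 := rfl
    have ha := Nat.left_le_pair a.encode b.encode
    have hb := Nat.right_le_pair a.encode b.encode
    have e2 : ((CodeO.prec a b).encode - 5) / 4 = Nat.pair a.encode b.encode := by omega
    rw [if_neg (by omega), if_neg (by omega), if_neg (by omega), if_neg (by omega),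
      if_neg (by omega), if_neg (by omega), if_pos (by omega), e2,
      Nat.unpair_pair, key a (by omega), key b (by omega)]
    rfl
  | rfind' a =>
    have e : (CodeO.rfind' a).encode = 2 * (2 * a.encode + 1) + 6 := rfl
    have e2 : ((CodeO.rfind' a).encode - 5) / 4 = a.encode := by omega
    rw [if_neg (by omega), if_neg (by omega), if_neg (by omega), if_neg (by omega),
      if_neg (by omega), if_neg (by omega), if_neg (by omega), if_neg (by omega), e2,
      key a (by omega)]
    rfl

theorem trC_decO_primrec : Primrec (fun n => trC (decO n)) := by
  have : Primrec₂ (fun (_ : Unit) (n : ℕ) => trC (decO n)) := by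
    refine Primrec.nat_strong_rec _ (g := fun _ L => some (trStep L)) ?_ ?_
    · exact (Primrec.option_some.comp (trStep_primrec.comp Primrec.snd)).to₂
    · intro _ n
      rw [trStep_spec]
  exact this.comp (Primrec.const ()) Primrec.id

theorem mem_HaltingSet (c : CodeO) :
    c.encode ∈ HaltingSet ↔ (c.eval (fun _ => 0) c.encode).Dom := by
  have : c.encode ∈ HaltingSet ↔
      ∃ d : CodeO, d.encode = c.encode ∧ (d.eval (fun _ => 0) c.encode).Dom := by
    unfold HaltingSet iterJump jump
    simp only [Set.mem_ofPred_eq, iterJump]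
    split_ifs with h <;> simp [h]
  rw [this]
  constructor
  · rintro ⟨d, hd, h⟩
    rwa [CodeO.encode_inj hd] at h
  · intro h
    exact ⟨c, rfl, h⟩

/-- The halting set is c.e. -/
theorem exists_code_halting : ∃ cK : Code, ∀ e, (cK.eval e).Dom ↔ e ∈ HaltingSet := by
  have : Partrec (fun e : ℕ => (trC (decO e)).eval e) :=
    Code.eval_part.comp trC_decO_primrec.to_comp Computable.id
  obtain ⟨cK, hK⟩ := Code.exists_code.1 (Partrec.nat_iff.1 this)
  refine ⟨cK, fun e => ?_⟩
  have := mem_HaltingSet (decO e)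
  rw [encode_decO, ← trC_eval] at this
  rw [this, hK]

theorem halting_not_computable : ¬ Computable (chi HaltingSet) := by
  intro h
  have h1 : Partrec (fun e : ℕ => bif (chi HaltingSet e == 0) then Part.some 0 else Part.none) :=
    Partrec.cond ((Primrec.beq (α := ℕ)).to_comp.comp h (Computable.const 0))
      (Computable.const 0).partrec Partrec.none
  obtain ⟨c, hc⟩ := Code.exists_code.1 (Partrec.nat_iff.1 h1)
  have h2 := mem_HaltingSet (emb c)
  rw [emb_eval, hc] at h2
  by_cases h3 : (emb c).encode ∈ HaltingSet
  · simp [h3, chi] at h2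
  · simp [h3, chi] at h2

theorem not_computable_of_TuringLEs {A : Set ℕ} (h : TuringLEs HaltingSet A) :
    ¬ ComputablePred fun n => n ∈ A := by
  intro hA
  obtain ⟨c, hc⟩ := h
  apply halting_not_computable
  obtain ⟨f, hf, hfA⟩ := ComputablePred.computable_iff.1 hA
  have hO : Computable (chi A) := by
    have : chi A = fun n => bif f n then 1 else 0 := by
      funext n
      have := congrFun hfA n
      by_cases hn : n ∈ A
      · have h2 : f n = true := this.mp hn
        simp [chi, hn, h2]
      · have h2 : f n = false := by
          cases h3 : f n
          · rfl
          · exact absurd (this.mpr h3) hn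
        simp [chi, hn, h2]
    rw [this]
    exact Computable.cond hf (Computable.const 1) (Computable.const 0)
  have := c.eval_partrec hO
  have e : c.eval (chi A) = ((chi HaltingSet : ℕ → ℕ) : ℕ →. ℕ) := funext hc
  rw [e] at this
  exact Partrec.nat_iff.2 this

theorem exists_codeO {f : ℕ → ℕ} (hf : Computable f) :
    ∃ c : CodeO, ∀ O n, c.eval O n = Part.some (f n) := by
  obtain ⟨c, hc⟩ := Code.exists_code.1 (Partrec.nat_iff.1 hf)
  exact ⟨emb c, fun O n => by rw [emb_eval, hc]; rfl⟩

/-! ### Search with an oracle -/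

/-- Initial segments of an oracle. -/
def pre (O : ℕ → ℕ) (t : ℕ) : List ℕ := (List.range t).map O

theorem eval_comp (O : ℕ → ℕ) (f g : CodeO) (n : ℕ) :
    (CodeO.comp f g).eval O n = (g.eval O n).bind fun m => f.eval O m := rfl

theorem eval_pair (O : ℕ → ℕ) (f g : CodeO) (n : ℕ) :
    (CodeO.pair f g).eval O n =
      (f.eval O n).bind fun a => (g.eval O n).bind fun b => Part.some (Nat.pair a b) := by
  change (Part.map Nat.pair (f.eval O n)).bind (fun h => Part.map h (g.eval O n)) = _
  ext v
  simp [Part.mem_bind_iff, eq_comm]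

theorem eval_left (O : ℕ → ℕ) (n : ℕ) : CodeO.left.eval O n = Part.some n.unpair.1 := rfl

theorem eval_right (O : ℕ → ℕ) (n : ℕ) : CodeO.right.eval O n = Part.some n.unpair.2 := rfl

theorem eval_oracle (O : ℕ → ℕ) (n : ℕ) : CodeO.oracle.eval O n = Part.some (O n) := rfl

theorem eval_zero (O : ℕ → ℕ) (n : ℕ) : CodeO.zero.eval O n = Part.some 0 := rfl

theorem eval_prec_zero (O : ℕ → ℕ) (f g : CodeO) (a : ℕ) :
    (CodeO.prec f g).eval O (Nat.pair a 0) = f.eval O a := by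
  simp [CodeO.eval]

theorem eval_prec_succ (O : ℕ → ℕ) (f g : CodeO) (a t : ℕ) :
    (CodeO.prec f g).eval O (Nat.pair a (t + 1)) =
      ((CodeO.prec f g).eval O (Nat.pair a t)).bind fun i =>
        g.eval O (Nat.pair a (Nat.pair t i)) := by
  simp [CodeO.eval]

theorem eval_rfind (O : ℕ → ℕ) (f : CodeO) (a : ℕ) :
    (CodeO.rfind' f).eval O (Nat.pair a 0) =
      Nat.rfind fun n => (f.eval O (Nat.pair a n)).map (fun m => decide (m = 0)) := by
  simp only [CodeO.eval, Nat.unpaired, Nat.unpair_pair, Nat.add_zero]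
  exact Part.map_id' (fun _ => rfl) _

theorem exists_cpre : ∃ c : CodeO, ∀ O a t,
    c.eval O (Nat.pair a t) = Part.some (Encodable.encode (pre O t)) := by
  have hs : Computable (fun z : ℕ =>
      Encodable.encode (Denumerable.ofNat (List ℕ) z.unpair.1 ++ [z.unpair.2])) :=
    Computable.encode.comp (Computable.list_concat.comp
      ((Computable.ofNat _).comp (Computable.fst.comp Computable.unpair))
      (Computable.snd.comp Computable.unpair))
  obtain ⟨cs, hcs⟩ := exists_codeO hs
  refine ⟨.prec .zero (.comp cs (.pair (.comp .right .right) (.comp .oracle (.comp .left .right)))),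
    fun O a t => ?_⟩
  induction t with
  | zero => rw [eval_prec_zero]; rfl
  | succ t ih =>
    rw [eval_prec_succ, ih]
    simp [eval_comp, eval_pair, eval_left, eval_right, eval_oracle, hcs, pre, List.range_succ]

theorem exists_search {d : ℕ → List ℕ → Bool} {out : ℕ → List ℕ → ℕ}
    (hd : Computable₂ d) (ho : Computable₂ out) :
    ∃ c : CodeO, ∀ O n, c.eval O n =
      (Nat.rfind fun t => Part.some (d n (pre O t))).map fun t => out n (pre O t) := by
  obtain ⟨cp, hcp⟩ := exists_cpre
  have hl : Computable (fun z : ℕ => Denumerable.ofNat (List ℕ) z.unpair.2) :=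
    (Computable.ofNat _).comp (Computable.snd.comp Computable.unpair)
  have hn : Computable (fun z : ℕ => z.unpair.1) := Computable.fst.comp Computable.unpair
  obtain ⟨cd, hcd⟩ := exists_codeO (f := fun z : ℕ =>
      bif d z.unpair.1 (Denumerable.ofNat (List ℕ) z.unpair.2) then 0 else 1)
    (Computable.cond (hd.comp hn hl) (Computable.const 0) (Computable.const 1))
  obtain ⟨co, hco⟩ := exists_codeO (f := fun z : ℕ =>
      out z.unpair.1 (Denumerable.ofNat (List ℕ) z.unpair.2)) (ho.comp hn hl)
  have ht : ∀ O n t, (CodeO.comp cd (.pair .left cp)).eval O (Nat.pair n t) =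
      Part.some (bif d n (pre O t) then 0 else 1) := by
    intro O n t
    simp [eval_comp, eval_pair, eval_left, hcp, hcd]
  refine ⟨.comp co (.comp (.pair .left cp) (.pair (.pair .left .right)
    (.comp (.rfind' (.comp cd (.pair .left cp))) (.pair (.pair .left .right) .zero)))), ?_⟩
  intro O n
  have hf : (CodeO.comp (.rfind' (.comp cd (.pair .left cp)))
      (.pair (.pair .left .right) .zero)).eval O n =
      Nat.rfind fun t => Part.some (d n (pre O t)) := by
    have e : (CodeO.pair (.pair .left .right) .zero).eval O n = Part.some (Nat.pair n 0) := by
      simp [eval_pair, eval_left, eval_right, eval_zero]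
    rw [eval_comp, e, Part.bind_some, eval_rfind]
    congr 1
    funext t
    rw [ht]
    cases d n (pre O t) <;> simp
  rw [eval_comp, eval_comp, eval_pair, hf]
  ext v
  simp [eval_pair, eval_left, eval_right, hcp, hco, eq_comm]

end RandProb

namespace RandProb

open Nat.Partrec (Code)

/-! ### The deficiency set of a function -/

/-- Deficiency set. -/
def defi (h : ℕ → ℕ) : Set ℕ := {n | ∃ t, n < t ∧ h t ≤ h n}

theorem not_mem_defi {h : ℕ → ℕ} {n : ℕ} : n ∉ defi h ↔ ∀ t, n < t → h n < h t := by
  simp [defi]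

theorem defi_compl_inj (h : ℕ → ℕ) : Set.InjOn h (defi h)ᶜ := by
  intro a ha b hb hab
  have ha := not_mem_defi.1 ha
  have hb := not_mem_defi.1 hb
  rcases Nat.lt_trichotomy a b with hlt | heq | hgt
  · have := ha b hlt; omega
  · exact heq
  · have := hb a hgt; omega

theorem defi_cofinite {h : ℕ → ℕ} {i : ℕ} (hi : ∀ N, ∃ t, N < t ∧ h t = i) :
    (defi h)ᶜ.Finite := by
  refine Set.Finite.of_finite_image (f := h) ?_ (defi_compl_inj h)
  refine (Set.finite_Iio i).subset ?_
  rintro _ ⟨n, hn, rfl⟩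
  obtain ⟨t, ht, hti⟩ := hi n
  have := not_mem_defi.1 hn t ht
  rw [hti] at this
  exact this

theorem defi_compl_infinite {h : ℕ → ℕ} (hf : ∀ i, {s | h s = i}.Finite) :
    (defi h)ᶜ.Infinite := by
  refine Set.infinite_of_forall_exists_gt ?_
  intro N
  have hex : ∃ v, ∃ t, N < t ∧ h t = v := ⟨_, N + 1, by omega, rfl⟩
  obtain ⟨t0, ht0, hv⟩ := Nat.find_spec hex
  have hfin : {t | N < t ∧ h t = Nat.find hex}.Finite :=
    (hf (Nat.find hex)).subset (fun t ht => ht.2)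
  obtain ⟨s, hs, hmax⟩ := Set.exists_max_image _ (fun t => t) hfin ⟨t0, ht0, hv⟩
  refine ⟨s, not_mem_defi.2 ?_, hs.1⟩
  intro t hst
  have h1 : Nat.find hex ≤ h t := Nat.find_min' hex ⟨t, hs.1.trans hst, rfl⟩
  have h2 : h t ≠ Nat.find hex := fun he => by
    have := hmax t ⟨hs.1.trans hst, he⟩
    omega
  have := hs.2
  omega

theorem defi_count {h : ℕ → ℕ} {e t : ℕ}
    (hc : e < ((Finset.range t).filter (fun s => s ∉ defi h)).card) (s : ℕ) (hs : h s = e) :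
    s < t := by
  by_contra hst
  have hex : ∃ a ∈ (Finset.range t).filter (fun s => s ∉ defi h), e ≤ h a := by
    by_contra hcon
    push Not at hcon
    have hle := Finset.card_le_card_of_injOn (s := (Finset.range t).filter (fun s => s ∉ defi h))
      (t := Finset.range e) h (fun a ha => by
        have := hcon a ha
        simpa using this) (fun a ha b hb => by
        have ha' := Finset.mem_filter.1 (Finset.mem_coe.1 ha)
        have hb' := Finset.mem_filter.1 (Finset.mem_coe.1 hb)
        exact defi_compl_inj h ha'.2 hb'.2)
    rw [Finset.card_range] at hle
    omega
  obtain ⟨a, ha, hea⟩ := hex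
  rw [Finset.mem_filter, Finset.mem_range] at ha
  have := not_mem_defi.1 ha.2 s (by omega)
  omega

/-! ### Events -/

/-- `u` is the first stage at which `c` halts on `m`. -/
def firstAt (c : Code) (m u : ℕ) : Bool :=
  (c.evaln u m).isSome && !(c.evaln (u - 1) m).isSome

theorem evaln_isSome_mono {c : Code} {m u v : ℕ} (h : u ≤ v) (hu : (c.evaln u m).isSome = true) :
    (c.evaln v m).isSome = true := by
  obtain ⟨x, hx⟩ := Option.isSome_iff_exists.1 hu
  exact Option.isSome_iff_exists.2 ⟨x, Code.evaln_mono h hx⟩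

theorem dom_iff_evaln {c : Code} {m : ℕ} : (c.eval m).Dom ↔ ∃ u, (c.evaln u m).isSome = true := by
  constructor
  · intro h
    obtain ⟨u, hu⟩ := Code.evaln_complete.1 (Part.get_mem h)
    exact ⟨u, Option.isSome_iff_exists.2 ⟨_, hu⟩⟩
  · rintro ⟨u, hu⟩
    obtain ⟨x, hx⟩ := Option.isSome_iff_exists.1 hu
    exact Part.dom_iff_mem.2 ⟨x, Code.evaln_sound hx⟩

theorem firstAt_dom {c : Code} {m u : ℕ} (h : firstAt c m u = true) : (c.eval m).Dom := by
  simp only [firstAt, Bool.and_eq_true] at h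
  exact dom_iff_evaln.2 ⟨u, h.1⟩

theorem firstAt_unique {c : Code} {m u v : ℕ} (hu : firstAt c m u = true)
    (hv : firstAt c m v = true) : u = v := by
  have aux : ∀ u v, firstAt c m u = true → firstAt c m v = true → ¬ u < v := by
    intro u v hu hv huv
    simp only [firstAt, Bool.and_eq_true, Bool.not_eq_true'] at hu hv
    have := evaln_isSome_mono (v := v - 1) (by omega) hu.1
    rw [hv.2] at this
    exact absurd this (by simp)
  have h1 := aux u v hu hv
  have h2 := aux v u hv hu
  omega

theorem exists_firstAt {c : Code} {m : ℕ} (h : (c.eval m).Dom) : ∃ u, firstAt c m u = true := by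
  have hex := dom_iff_evaln.1 h
  refine ⟨Nat.find hex, ?_⟩
  simp only [firstAt, Bool.and_eq_true, Bool.not_eq_true']
  refine ⟨Nat.find_spec hex, ?_⟩
  have h0 : Nat.find hex ≠ 0 := by
    intro h0
    have := Nat.find_spec hex
    rw [h0] at this
    simp [Code.evaln] at this
  have := Nat.find_min hex (m := Nat.find hex - 1) (by omega)
  simpa using this

theorem firstAt_primrec (c : Code) : Primrec₂ (firstAt c) := by
  have h1 : Primrec (fun p : ℕ × ℕ => (c.evaln p.2 p.1).isSome) :=
    Primrec.option_isSome.comp (Code.primrec_evaln.comp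
      (Primrec.pair (Primrec.pair Primrec.snd (Primrec.const c)) Primrec.fst))
  have h2 : Primrec (fun p : ℕ × ℕ => (c.evaln (p.2 - 1) p.1).isSome) :=
    Primrec.option_isSome.comp (Code.primrec_evaln.comp
      (Primrec.pair (Primrec.pair (Primrec.nat_sub.comp Primrec.snd (Primrec.const 1))
        (Primrec.const c)) Primrec.fst))
  exact (Primrec.and.comp h1 (Primrec.not.comp h2)).to₂

/-- A code halting on `⟨m,l⟩` iff `c` halts on `⟨m,l'⟩` for all `l' < l`. -/
def allC (c : Code) : Code :=
  .prec .zero (.comp c (.pair .left (.comp .left .right)))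

theorem allC_dom (c : Code) (m l : ℕ) :
    ((allC c).eval (Nat.pair m l)).Dom ↔ ∀ k < l, (c.eval (Nat.pair m k)).Dom := by
  have hs : ∀ a y i, (Code.comp c (.pair .left (.comp .left .right))).eval
      (Nat.pair a (Nat.pair y i)) = c.eval (Nat.pair a y) := by
    intro a y i
    have := emb_eval (fun _ => 0) (Code.comp c (.pair .left (.comp .left .right)))
    rw [← this, ← emb_eval (fun _ => 0) c]
    simp [emb, eval_comp, eval_pair, eval_left, eval_right]
  induction l with
  | zero =>
    unfold allC
    rw [Code.eval_prec_zero]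
    simp only [Nat.not_lt_zero, false_imp_iff, implies_true, iff_true]
    trivial
  | succ l ih =>
    have e : (allC c).eval (Nat.pair m (l + 1)) =
        ((allC c).eval (Nat.pair m l)).bind fun _ => c.eval (Nat.pair m l) := by
      unfold allC
      rw [Code.eval_prec_succ]
      simp only [hs]
      rfl
    rw [e, Part.bind_dom]
    constructor
    · rintro ⟨h1, h2⟩ k hk
      rcases Nat.lt_succ_iff_lt_or_eq.1 hk with h | rfl
      · exact ih.1 h1 k h
      · exact h2
    · intro h
      exact ⟨ih.2 fun k hk => h k (by omega), h l (by omega)⟩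

/-- The string coded by a list of numbers. -/
def bitsOf (L : List ℕ) (n : ℕ) : List Bool := (List.range n).map fun j => L.getD j 0 == 1

theorem bitsOf_pre (X : Cantor) {n t : ℕ} (h : n ≤ t) :
    bitsOf (pre (oX X) t) n = initSeg X n := by
  unfold bitsOf pre initSeg
  refine List.map_congr_left ?_
  intro j hj
  have hj : j < t := (List.mem_range.1 hj).trans_le h
  cases hX : X j <;> simp [List.getD, hj, oX, hX]

theorem bitsOf_primrec : Primrec₂ bitsOf := by
  unfold bitsOf
  refine Primrec.list_map (Primrec.list_range.comp Primrec.snd) ?_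
  exact (Primrec.beq.comp ((Primrec.list_getD 0).comp (Primrec.fst.comp Primrec.fst) Primrec.snd)
    (Primrec.const 1)).to₂

/-- The event test: at stage `s = ⟨⟨i,l⟩,u⟩`, with `i = ⟨n,k⟩`. -/
def evt (cK cA : Code) (σ : List Bool) (s : ℕ) : Bool :=
  bif s.unpair.1.unpair.2 == 0 then firstAt cK s.unpair.1.unpair.1 s.unpair.2
  else firstAt cA (Nat.pair (Nat.pair (Encodable.encode σ) s.unpair.1.unpair.1.unpair.2)
    s.unpair.1.unpair.2) s.unpair.2

/-- Index acting at stage `s`. -/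
def hL (cK cA : Code) (L : List ℕ) (s : ℕ) : ℕ :=
  bif evt cK cA (bitsOf L s.unpair.1.unpair.1.unpair.1) s then s.unpair.1.unpair.1 else s

/-- Index acting at stage `s`, with oracle `X`. -/
def hX (cK cA : Code) (X : Cantor) (s : ℕ) : ℕ :=
  bif evt cK cA (initSeg X s.unpair.1.unpair.1.unpair.1) s then s.unpair.1.unpair.1 else s

theorem hL_pre (cK cA : Code) (X : Cantor) {s t : ℕ} (h : s ≤ t) :
    hL cK cA (pre (oX X) t) s = hX cK cA X s := by
  unfold hL hX
  rw [bitsOf_pre]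
  exact (Nat.unpair_left_le _).trans ((Nat.unpair_left_le _).trans ((Nat.unpair_left_le _).trans h))

theorem hL_primrec (cK cA : Code) : Primrec₂ (hL cK cA) := by
  have hs : Primrec (fun p : List ℕ × ℕ => p.2.unpair) := Primrec.unpair.comp Primrec.snd
  have hil : Primrec (fun p : List ℕ × ℕ => p.2.unpair.1.unpair) :=
    Primrec.unpair.comp (Primrec.fst.comp hs)
  have hi := Primrec.fst.comp hil
  have hl := Primrec.snd.comp hil
  have hu := Primrec.snd.comp hs
  have hnk : Primrec (fun p : List ℕ × ℕ => p.2.unpair.1.unpair.1.unpair) := Primrec.unpair.comp hi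
  have hb : Primrec (fun p : List ℕ × ℕ => bitsOf p.1 p.2.unpair.1.unpair.1.unpair.1) :=
    bitsOf_primrec.comp Primrec.fst (Primrec.fst.comp hnk)
  unfold hL evt
  refine Primrec.cond (Primrec.cond (Primrec.beq.comp hl (Primrec.const 0))
    ((firstAt_primrec cK).comp hi hu) ((firstAt_primrec cA).comp ?_ hu)) hi Primrec.snd
  exact Primrec₂.natPair.comp (Primrec₂.natPair.comp (Primrec.encode.comp hb)
    (Primrec.snd.comp hnk)) hl

theorem hX_infinite {cK cJ : Code} {X : Cantor} {n k : ℕ}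
    (h : ∀ l, (cJ.eval (Nat.pair (Nat.pair (Encodable.encode (initSeg X n)) k) l)).Dom) (N : ℕ) :
    ∃ t, N < t ∧ hX cK (allC cJ) X t = Nat.pair n k := by
  obtain ⟨u, hu⟩ := exists_firstAt
    ((allC_dom cJ (Nat.pair (Encodable.encode (initSeg X n)) k) (N + 1)).2 fun l _ => h l)
  refine ⟨Nat.pair (Nat.pair (Nat.pair n k) (N + 1)) u, ?_, ?_⟩
  · have h1 := Nat.right_le_pair (Nat.pair n k) (N + 1)
    have h2 := Nat.left_le_pair (Nat.pair (Nat.pair n k) (N + 1)) u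
    omega
  · simp [hX, evt, hu]

theorem hX_finite {cK cJ : Code} {X : Cantor}
    (h : ∀ n k, ∃ l, ¬ (cJ.eval (Nat.pair (Nat.pair (Encodable.encode (initSeg X n)) k) l)).Dom)
    (i : ℕ) : {s | hX cK (allC cJ) X s = i}.Finite := by
  obtain ⟨l0, hl0⟩ := h i.unpair.1 i.unpair.2
  have hsub : {s | hX cK (allC cJ) X s = i} ⊆ {i} ∪ {s | s.unpair.1.unpair.1 = i ∧
      evt cK (allC cJ) (initSeg X i.unpair.1) s = true} := by
    intro s hs
    have hs : hX cK (allC cJ) X s = i := hs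
    unfold hX at hs
    cases he : evt cK (allC cJ) (initSeg X s.unpair.1.unpair.1.unpair.1) s
    · rw [he] at hs
      exact Or.inl hs
    · rw [he] at hs
      have hs : s.unpair.1.unpair.1 = i := hs
      rw [hs] at he
      exact Or.inr ⟨hs, he⟩
  refine Set.Finite.subset ((Set.finite_singleton i).union ?_) hsub
  refine Set.Finite.of_finite_image (f := fun s => s.unpair.1.unpair.2) ?_ ?_
  · refine (Set.finite_Iic l0).subset ?_
    rintro _ ⟨s, ⟨hs, he⟩, rfl⟩
    by_contra hlt
    have hlt : l0 < s.unpair.1.unpair.2 := not_le.1 hlt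
    have hne : (s.unpair.1.unpair.2 == 0) = false := by
      simp only [beq_eq_false_iff_ne]; omega
    unfold evt at he
    rw [hne, cond_false, hs] at he
    exact hl0 ((allC_dom _ _ _).1 (firstAt_dom he) l0 hlt)
  · rintro s ⟨hs, he⟩ t ⟨ht, hf⟩ hst
    have hst : s.unpair.1.unpair.2 = t.unpair.1.unpair.2 := hst
    have h1 : s.unpair.1 = t.unpair.1 := by
      rw [← Nat.pair_unpair s.unpair.1, ← Nat.pair_unpair t.unpair.1, hs, ht, hst]
    have h2 : s.unpair.2 = t.unpair.2 := by
      unfold evt at he hf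
      rw [h1] at he
      cases hz : (t.unpair.1.unpair.2 == 0)
      · rw [hz] at he hf
        exact firstAt_unique he hf
      · rw [hz] at he hf
        exact firstAt_unique he hf
    rw [← Nat.pair_unpair s, ← Nat.pair_unpair t, h1, h2]

theorem hX_halting {cK cA : Code} {X : Cantor} {e : ℕ} (h : (cK.eval e).Dom) :
    ∃ u s, u ≤ s ∧ hX cK cA X s = e ∧ (cK.evaln u e).isSome = true := by
  obtain ⟨u, hu⟩ := exists_firstAt h
  refine ⟨u, Nat.pair (Nat.pair e 0) u, Nat.right_le_pair _ _, ?_, ?_⟩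
  · simp [hX, evt, hu]
  · simp only [firstAt, Bool.and_eq_true] at hu
    exact hu.1

/-! ### The machine and the reduction -/

theorem exists_machine (cK cA : Code) : ∃ M : CodeO, ∀ X n v,
    v ∈ M.eval (oX X) n ↔ (n ∈ defi (hX cK cA X) ∧ v = n) := by
  have hd : Primrec₂ (fun (n : ℕ) (L : List ℕ) =>
      decide (n < L.length) && decide (hL cK cA L L.length ≤ hL cK cA L n)) := by
    have hlen : Primrec (fun p : ℕ × List ℕ => p.2.length) := Primrec.list_length.comp Primrec.snd
    have p1 := Primrec.nat_lt.decide.comp (Primrec.fst (α := ℕ) (β := List ℕ)) hlen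
    have p2 := Primrec.nat_le.decide.comp ((hL_primrec cK cA).comp (Primrec.snd (α := ℕ)) hlen)
      ((hL_primrec cK cA).comp (Primrec.snd (α := ℕ)) Primrec.fst)
    exact (Primrec.and.comp p1 p2).to₂
  obtain ⟨M, hM⟩ := exists_search hd.to_comp (out := fun n _ => n) Computable.fst
  refine ⟨M, fun X n v => ?_⟩
  have key : ∀ t, (decide (n < (pre (oX X) t).length) &&
      decide (hL cK cA (pre (oX X) t) (pre (oX X) t).length ≤ hL cK cA (pre (oX X) t) n)) = true ↔
      (n < t ∧ hX cK cA X t ≤ hX cK cA X n) := by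
    intro t
    have hlen : (pre (oX X) t).length = t := by simp [pre]
    rw [hlen, hL_pre cK cA X le_rfl]
    simp only [Bool.and_eq_true, decide_eq_true_eq]
    constructor
    · rintro ⟨h1, h2⟩
      rw [hL_pre cK cA X h1.le] at h2
      exact ⟨h1, h2⟩
    · rintro ⟨h1, h2⟩
      rw [hL_pre cK cA X h1.le]
      exact ⟨h1, h2⟩
  rw [hM]
  simp only [Part.mem_map_iff]
  constructor
  · rintro ⟨t, ht, rfl⟩
    have := Nat.rfind_spec ht
    rw [Part.mem_some_iff] at this
    exact ⟨⟨t, (key t).1 this.symm⟩, rfl⟩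
  · rintro ⟨⟨t, ht⟩, rfl⟩
    have hdom : (Nat.rfind fun t => Part.some (decide (v < (pre (oX X) t).length) &&
      decide (hL cK cA (pre (oX X) t) (pre (oX X) t).length ≤ hL cK cA (pre (oX X) t) v))).Dom := by
      refine Nat.rfind_dom.2 ?_
      exact ⟨t, by rw [Part.mem_some_iff]; exact ((key t).2 ht).symm, fun _ => trivial⟩
    exact ⟨_, Part.get_mem hdom, rfl⟩

theorem pre_count (A : Set ℕ) (t : ℕ) :
    ((pre (chi A) t).filter (fun x => x = 0)).length =
      ((Finset.range t).filter (fun s => s ∉ A)).card := by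
  induction t with
  | zero => simp [pre]
  | succ t ih =>
    have e : pre (chi A) (t + 1) = pre (chi A) t ++ [chi A t] := by
      simp [pre, List.range_succ]
    rw [e, List.filter_append, List.length_append, ih, Finset.range_add_one, Finset.filter_insert]
    by_cases h : t ∈ A
    · simp [h, chi]
    · rw [if_pos h, Finset.card_insert_of_notMem (by simp)]
      simp [h, chi]

theorem turing_of_finite {cK cA : Code} (hK : ∀ e, (cK.eval e).Dom ↔ e ∈ HaltingSet) {X : Cantor}
    (hf : ∀ i, {s | hX cK cA X s = i}.Finite) :
    TuringLEs HaltingSet (defi (hX cK cA X)) := by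
  have hd : Primrec₂ (fun (e : ℕ) (L : List ℕ) =>
      decide (e < (L.filter (fun x => x = 0)).length)) := by
    have hz : PrimrecPred (fun x : ℕ => x = 0) := Primrec.eq.comp Primrec.id (Primrec.const 0)
    have hlen : Primrec (fun p : ℕ × List ℕ => (p.2.filter (fun x => x = 0)).length) :=
      Primrec.list_length.comp ((Primrec.listFilter hz).comp Primrec.snd)
    exact (Primrec.nat_lt.decide.comp Primrec.fst hlen).to₂
  have ho : Primrec₂ (fun (e : ℕ) (L : List ℕ) =>
      bif (cK.evaln L.length e).isSome then 1 else 0) := by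
    refine Primrec.cond (Primrec.option_isSome.comp (Code.primrec_evaln.comp
      (Primrec.pair (Primrec.pair (Primrec.list_length.comp Primrec.snd) (Primrec.const cK))
        Primrec.fst))) (Primrec.const 1) (Primrec.const 0)
  obtain ⟨c, hc⟩ := exists_search hd.to_comp ho.to_comp
  refine ⟨c, fun e => ?_⟩
  rw [hc, Part.eq_some_iff]
  simp only [pre_count]
  have hdom : (Nat.rfind fun t => Part.some (decide
      (e < ((Finset.range t).filter (fun s => s ∉ defi (hX cK cA X))).card))).Dom := by
    refine Nat.rfind_dom.2 ?_
    obtain ⟨F, hF, hcard⟩ := (defi_compl_infinite hf).exists_subset_card_eq (e + 1)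
    obtain ⟨t, ht⟩ := F.exists_nat_subset_range
    refine ⟨t, ?_, fun _ => trivial⟩
    rw [Part.mem_some_iff, eq_comm, decide_eq_true_eq]
    have : F ⊆ (Finset.range t).filter (fun s => s ∉ defi (hX cK cA X)) := by
      intro a ha
      exact Finset.mem_filter.2 ⟨ht ha, hF ha⟩
    have := Finset.card_le_card this
    omega
  have hmem := Part.get_mem hdom
  have hspec := Nat.rfind_spec hmem
  rw [Part.mem_some_iff, eq_comm, decide_eq_true_eq] at hspec
  generalize (Nat.rfind _).get hdom = t at hmem hspec
  rw [Part.mem_map_iff]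
  refine ⟨t, hmem, ?_⟩
  have hlen : (pre (chi (defi (hX cK cA X))) t).length = t := by simp [pre]
  rw [hlen]
  by_cases he : e ∈ HaltingSet
  · obtain ⟨u, s, hus, hs, hu⟩ := hX_halting (cA := cA) (X := X) ((hK e).2 he)
    have := defi_count hspec s hs
    rw [evaln_isSome_mono (v := t) (by omega) hu]
    simp [chi, he]
  · have : (cK.evaln t e).isSome = false := by
      by_contra hcon
      exact he ((hK e).1 (dom_iff_evaln.2 ⟨t, (Bool.not_eq_false _).mp hcon⟩))
    rw [this]
    simp [chi, he]

theorem computable_of_cofinite {A : Set ℕ} (h : Aᶜ.Finite) : ComputablePred fun n => n ∈ A := by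
  obtain ⟨F, hF⟩ := h.exists_finset_coe
  have h1 : PrimrecRel (fun a b : ℕ => a = b) := Primrec.eq
  have h2 : PrimrecPred (fun n : ℕ => ∃ a ∈ F.toList, a = n) :=
    h1.exists_mem_list.comp (Primrec.const F.toList) Primrec.id
  refine (PrimrecPred.computablePred h2).not.of_eq ?_
  intro n
  have : n ∈ F ↔ n ∈ Aᶜ := by rw [← hF]; simp
  simp only [Finset.mem_toList, exists_eq_right, this]
  simp

/-- **From a `Σ^0_3` set of strings to an oracle machine (cofiniteness/computability).**
Given an upward closed `Σ^0_3` set `J` of strings there is an oracle machine `M` such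
that for every `X`: `X` has a prefix in `J` iff the domain of `M(X)` is cofinite iff the
domain of `M(X)` is computable; moreover the domain of `M(X)` equals its range, and if
`X` has no prefix in `J` then the domain of `M(X)` computes the halting problem. -/
theorem sigma3_to_oracle_machine (J : Set (List Bool)) (hJ : SigmaStr 3 J)
    (hup : UpClosed J) :
    ∃ M : CodeO, ∀ X : Cantor,
      (X ∈ cyl J ↔ X ∈ COF M) ∧
      (X ∈ cyl J ↔ X ∈ COM M) ∧
      domSet M X = ranSet M X ∧
      (X ∉ cyl J → TuringLEs HaltingSet (domSet M X)) := by
  obtain ⟨c, hc⟩ := hJ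
  obtain ⟨cK, hK⟩ := exists_code_halting
  obtain ⟨M, hM⟩ := exists_machine cK (allC (trC c))
  refine ⟨M, fun X => ?_⟩
  have hJ' : ∀ σ : List Bool, σ ∈ J ↔
      ∃ k, ∀ l, ((trC c).eval (Nat.pair (Nat.pair (Encodable.encode σ) k) l)).Dom := by
    intro σ
    have h1 : σ ∈ J ↔ Encodable.encode σ ∈ strCodes J := by
      constructor
      · intro h
        exact ⟨σ, h, rfl⟩
      · rintro ⟨τ, hτ, he⟩
        rwa [← Encodable.encode_injective he]
    rw [h1, hc, trC_eval]
    simp [SigmaNumIdx, eval0]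
  have hdom : domSet M X = defi (hX cK (allC (trC c)) X) := by
    ext n
    change (M.eval (oX X) n).Dom ↔ _
    rw [Part.dom_iff_mem]
    simp [hM]
  have hran : ranSet M X = defi (hX cK (allC (trC c)) X) := by
    ext v
    change (∃ n, v ∈ M.eval (oX X) n) ↔ _
    simp [hM]
  have hpos : X ∈ cyl J → (domSet M X)ᶜ.Finite := by
    rintro ⟨n, hn⟩
    obtain ⟨k, hk⟩ := (hJ' _).1 hn
    rw [hdom]
    exact defi_cofinite (hX_infinite hk)
  have hneg : X ∉ cyl J → TuringLEs HaltingSet (domSet M X) := by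
    intro hX
    rw [hdom]
    refine turing_of_finite hK (hX_finite ?_)
    intro n k
    by_contra hcon
    push Not at hcon
    exact hX ⟨n, (hJ' _).2 ⟨k, hcon⟩⟩
  have hcom : (domSet M X)ᶜ.Finite → ComputablePred fun n => n ∈ domSet M X :=
    computable_of_cofinite
  have hback : (ComputablePred fun n => n ∈ domSet M X) → X ∈ cyl J := by
    intro h
    by_contra hX
    exact not_computable_of_TuringLEs (hneg hX) h
  exact ⟨⟨hpos, fun h => hback (hcom h)⟩, ⟨fun h => hcom (hpos h), hback⟩, hdom.trans hran.symm, hneg⟩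

end RandProb
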